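/- arXiv:2003.12926 — 3 statements merged into one kernel-verified Lean document; each statement's English description precedes it below -/
import Mathlib

section
/- For all integers n ≥ 0 and k ≥ 1, 𝔠^{(k)}_{2n} = (-4)^n (n!)^2 ∫_{[0,1]^k} binom(p/2, n) · binom(-p/2, n) dx₁⋯dx_k, where p = x₁x₂⋯x_k is the product of the coordinates and binom(z,n) = z(z-1)⋯(z-n+1)/n! is the generalized binomial coefficient; the integral is over the unit cube [0,1]^k with Lebesgue measure. -/
/-- Stirling numbers of the first kind with level 2. -/
def T2 : ℕ → ℕ → ℕ
  | 0, 0 => 1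
  | 0, _ + 1 => 0
  | _ + 1, 0 => 0
  | n + 1, m + 1 => T2 n m + n ^ 2 * T2 n (m + 1)

/-- Poly-Cauchy numbers with level 2: `polyCauchy2 k n = 𝔠^{(k)}_{2n}`. -/
def polyCauchy2 (k : ℤ) (n : ℕ) : ℚ :=
  ∑ m ∈ Finset.range (n + 1), (-4 : ℚ) ^ (n - m) * (T2 n m : ℚ) / (2 * (m : ℚ) + 1) ^ k

/-- Generalized binomial coefficient `binom(z, n) = z(z-1)⋯(z-n+1)/n!`. -/
noncomputable def genBinom (z : ℝ) (n : ℕ) : ℝ :=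
  (∏ i ∈ Finset.range n, (z - (i : ℝ))) / (Nat.factorial n : ℝ)

theorem T2_zero_of_lt : ∀ (n m : ℕ), n < m → T2 n m = 0
  | 0, 0, h => by omega
  | 0, m + 1, _ => by simp [T2]
  | n + 1, 0, h => by omega
  | n + 1, m + 1, h => by
    rw [T2, T2_zero_of_lt n m (by omega), T2_zero_of_lt n (m + 1) (by omega)]; simp

theorem T2_poly (y : ℝ) (n : ℕ) :
    ∑ m ∈ Finset.range (n + 1), (-4 : ℝ) ^ (n - m) * (T2 n m : ℝ) * y ^ m =
      ∏ i ∈ Finset.range n, (y - 4 * (i : ℝ) ^ 2) := by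
  induction n with
  | zero => simp [T2]
  | succ n ih =>
    rw [Finset.prod_range_succ, ← ih, Finset.sum_range_succ']
    have h0 : (T2 (n + 1) 0 : ℝ) = 0 := by simp [T2]
    have h1 : ∀ m ∈ Finset.range (n + 1),
        (-4 : ℝ) ^ (n + 1 - (m + 1)) * (T2 (n + 1) (m + 1) : ℝ) * y ^ (m + 1) =
        y * ((-4 : ℝ) ^ (n - m) * (T2 n m : ℝ) * y ^ m) +
        (-4 * (n : ℝ) ^ 2) * ((-4 : ℝ) ^ (n - (m + 1)) * (T2 n (m + 1) : ℝ) * y ^ (m + 1)) := by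
      intro m hm
      have hm' : m < n + 1 := Finset.mem_range.mp hm
      rcases Nat.lt_or_ge m n with h | h
      · obtain ⟨d, rfl⟩ : ∃ d, n = m + 1 + d := ⟨n - (m + 1), by omega⟩
        have e1 : m + 1 + d + 1 - (m + 1) = d + 1 := by omega
        have e2 : m + 1 + d - m = d + 1 := by omega
        have e3 : m + 1 + d - (m + 1) = d := by omega
        rw [e1, e2, e3, T2]
        push_cast
        ring
      · have : m = n := by omega
        subst this
        rw [T2, T2_zero_of_lt m (m + 1) (by omega)]
        simp
        ring
    rw [Finset.sum_congr rfl h1, Finset.sum_add_distrib, ← Finset.mul_sum, ← Finset.mul_sum, h0]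
    have h2 : (n : ℝ) ^ 2 * ∑ m ∈ Finset.range (n + 1),
        (-4 : ℝ) ^ (n - (m + 1)) * (T2 n (m + 1) : ℝ) * y ^ (m + 1) =
        (n : ℝ) ^ 2 * ∑ m ∈ Finset.range (n + 1), (-4 : ℝ) ^ (n - m) * (T2 n m : ℝ) * y ^ m := by
      rw [Finset.sum_range_succ, T2_zero_of_lt n (n + 1) (by omega),
        Finset.sum_range_succ' _ n]
      cases n with
      | zero => simp
      | succ n => simp [T2]
    linear_combination (-4) * h2

theorem genBinom_mul (p : ℝ) (n : ℕ) :
    (-4 : ℝ) ^ n * (Nat.factorial n : ℝ) ^ 2 * (genBinom (p / 2) n * genBinom (-(p / 2)) n) =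
      ∏ i ∈ Finset.range n, (p ^ 2 - 4 * (i : ℝ) ^ 2) := by
  have hf : (Nat.factorial n : ℝ) ≠ 0 := by positivity
  have h : ∏ i ∈ Finset.range n, (p ^ 2 - 4 * (i : ℝ) ^ 2) =
      (-4 : ℝ) ^ n * ((∏ i ∈ Finset.range n, (p / 2 - (i : ℝ))) *
        ∏ i ∈ Finset.range n, (-(p / 2) - (i : ℝ))) := by
    rw [← Finset.prod_mul_distrib]
    conv_rhs => rw [← Finset.card_range n, ← Finset.prod_const, Finset.card_range,
      ← Finset.prod_mul_distrib]
    apply Finset.prod_congr rfl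
    intro i _
    ring
  rw [h, genBinom, genBinom]
  field_simp

theorem cube_integral (k m : ℕ) :
    ∫ x : Fin k → ℝ in Set.univ.pi (fun _ => Set.Icc (0 : ℝ) 1), ((∏ i, x i) ^ 2) ^ m =
      1 / (2 * (m : ℝ) + 1) ^ k := by
  have e : ∀ x : Fin k → ℝ, ((∏ i, x i) ^ 2) ^ m = ∏ i, (x i) ^ (2 * m) := by
    intro x; rw [← pow_mul, Finset.prod_pow]
  simp_rw [e]
  rw [MeasureTheory.volume_pi, MeasureTheory.Measure.restrict_pi_pi,
    MeasureTheory.integral_fintype_prod_eq_prod (fun _ (t : ℝ) => t ^ (2 * m))]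
  rw [MeasureTheory.integral_Icc_eq_integral_Ioc,
    ← intervalIntegral.integral_of_le zero_le_one, integral_pow]
  simp

theorem statement1 (n k : ℕ) (hk : 1 ≤ k) :
    (polyCauchy2 (k : ℤ) n : ℝ) =
      (-4 : ℝ) ^ n * (Nat.factorial n : ℝ) ^ 2 *
        ∫ x : Fin k → ℝ in Set.univ.pi (fun _ => Set.Icc (0 : ℝ) 1),
          genBinom ((∏ i, x i) / 2) n * genBinom (-((∏ i, x i) / 2)) n := by
  rw [← MeasureTheory.integral_const_mul]
  simp_rw [genBinom_mul, ← T2_poly]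
  rw [MeasureTheory.integral_finset_sum]
  · simp_rw [MeasureTheory.integral_const_mul, cube_integral]
    unfold polyCauchy2
    push_cast
    apply Finset.sum_congr rfl
    intro m _
    rw [zpow_natCast]
    ring
  · intro m _
    apply ContinuousOn.integrableOn_compact
    · exact isCompact_univ_pi (fun _ => isCompact_Icc)
    · fun_prop
end

section
/- For every integer n ≥ 0, ∑_{i=0}^{n} binom(2n, 2i) · 𝔠_{2i+2} · 𝔠_{2(n-i)+2} = (2n)!/30 · ∑_{l=0}^{n} (-1)^{n-l}(10n-8l+5)(2n-2l-3)!!/(2^{n-l}(n-l)!(2l)!) · 𝔠_{2l+4} − (2n)!/3 · ∑_{l=0}^{n} (-1)^{n-l}(6l+1)(2n-2l+1)!!/(2^{n-l}(n-l)!(2l)!) · 𝔠_{2l+2} − (2n)!/30 · ∑_{l=0}^{n} (-1)^{n-l}(160l³-220l²+72l-1)(2n-2l+1)!!/(2^{n-l}(n-l)!(2l)!) · 𝔠_{2l}. -/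
/-- Cauchy numbers with level 2: `cauchy2 n = 𝔠_{2n}`. -/
def cauchy2 (n : ℕ) : ℚ :=
  ∑ m ∈ Finset.range (n + 1), (-4 : ℚ) ^ (n - m) * (T2 n m : ℚ) / (2 * (m : ℚ) + 1)

/-- `odFact i = (2i-1)!!`, with `odFact 0 = (-1)!! = 1`. -/
def odFact : ℕ → ℚ
  | 0 => 1
  | i + 1 => (2 * (i : ℚ) + 1) * odFact i

/-- `ddf j = (2j-1)!!`, the odd double factorial extended to all integers:
for `j ≥ 0` it is `(2j-1)(2j-3)⋯1` (with `(-1)!! = 1`), and for `j = -i < 0`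
it is `(-(2i+1))!! = (-1)^i/(2i-1)!!`. -/
def ddf (j : ℤ) : ℚ :=
  if 0 ≤ j then odFact j.toNat else (-1 : ℚ) ^ (-j).toNat / odFact (-j).toNat

open PowerSeries

set_option linter.unusedSimpArgs false

noncomputable section

/-- even power series with given coefficients -/
def evS (a : ℕ → ℚ) : ℚ⟦X⟧ := PowerSeries.mk fun k => if Even k then a (k / 2) else 0

abbrev dX (f : ℚ⟦X⟧) : ℚ⟦X⟧ := PowerSeries.derivative ℚ f

lemma evS_coeff_even (a : ℕ → ℚ) (n : ℕ) : coeff (2 * n) (evS a) = a n := by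
  simp [evS]

lemma evS_coeff_odd (a : ℕ → ℚ) (n : ℕ) : coeff (2 * n + 1) (evS a) = 0 := by
  simp [evS]

lemma ps_ext {f g : ℚ⟦X⟧} (h0 : ∀ n, coeff (2 * n) f = coeff (2 * n) g)
    (h1 : ∀ n, coeff (2 * n + 1) f = coeff (2 * n + 1) g) : f = g := by
  ext k
  rcases Nat.even_or_odd' k with ⟨m, rfl | rfl⟩
  · exact h0 m
  · exact h1 m

lemma evS_theta (a : ℕ → ℚ) : X * dX (evS a) = evS (fun k => 2 * k * a k) := by
  refine ps_ext (fun n => ?_) (fun n => ?_)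
  · rw [evS_coeff_even]
    cases n with
    | zero => simp
    | succ n =>
      rw [show 2 * (n + 1) = (2 * n + 1) + 1 by ring, coeff_succ_X_mul, coeff_derivative,
        show 2 * n + 1 + 1 = 2 * (n + 1) by ring, evS_coeff_even]
      push_cast; ring
  · rw [evS_coeff_odd, coeff_succ_X_mul, coeff_derivative, evS_coeff_odd]; simp

lemma evS_dd (a : ℕ → ℚ) :
    dX (dX (evS a)) = evS (fun k => (2 * k + 2) * (2 * k + 1) * a (k + 1)) := by
  refine ps_ext (fun n => ?_) (fun n => ?_)
  · rw [evS_coeff_even, coeff_derivative, coeff_derivative,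
      show 2 * n + 1 + 1 = 2 * (n + 1) by ring, evS_coeff_even]
    push_cast; ring
  · rw [evS_coeff_odd, coeff_derivative, coeff_derivative,
      show 2 * n + 1 + 1 + 1 = 2 * (n + 1) + 1 by ring, evS_coeff_odd]; simp

lemma evS_add (a b : ℕ → ℚ) : evS a + evS b = evS (fun k => a k + b k) := by
  refine ps_ext (fun n => ?_) (fun n => ?_) <;>
  simp [evS_coeff_even, evS_coeff_odd]

lemma evS_smul (c : ℚ) (a : ℕ → ℚ) : C c * evS a = evS (fun k => c * a k) := by
  refine ps_ext (fun n => ?_) (fun n => ?_) <;>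
  simp [evS_coeff_even, evS_coeff_odd]

lemma evS_shift (a b : ℕ → ℚ) (h0 : b 0 = 0) (h : ∀ k, b (k + 1) = a k) :
    X ^ 2 * evS a = evS b := by
  refine ps_ext (fun n => ?_) (fun n => ?_)
  · rw [evS_coeff_even]
    cases n with
    | zero => simp [h0]
    | succ n =>
      rw [show 2 * (n + 1) = 2 * n + 2 by ring, coeff_X_pow_mul, evS_coeff_even, h]
  · rw [evS_coeff_odd]
    cases n with
    | zero => rw [pow_two, mul_assoc, coeff_succ_X_mul]; simp
    | succ n =>
      rw [show 2 * (n + 1) + 1 = 2 * n + 1 + 2 by ring, coeff_X_pow_mul, evS_coeff_odd]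

lemma sum_split (f : ℕ → ℚ) (n : ℕ) :
    ∑ i ∈ Finset.range (2 * n + 1), f i =
      ∑ i ∈ Finset.range (n + 1), f (2 * i) + ∑ i ∈ Finset.range n, f (2 * i + 1) := by
  induction n with
  | zero => simp
  | succ n ih =>
    rw [show 2 * (n + 1) + 1 = (2 * n + 1) + 1 + 1 by ring, Finset.sum_range_succ,
      Finset.sum_range_succ, ih, Finset.sum_range_succ _ (n + 1), Finset.sum_range_succ _ n,
      Finset.sum_range_succ _ n, show 2 * n + 1 + 1 = 2 * (n + 1) by ring]
    ring

lemma evS_mul_coeff (a b : ℕ → ℚ) (n : ℕ) :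
    coeff (2 * n) (evS a * evS b) = ∑ i ∈ Finset.range (n + 1), a i * b (n - i) := by
  rw [coeff_mul, Finset.Nat.sum_antidiagonal_eq_sum_range_succ
    (fun i j => coeff i (evS a) * coeff j (evS b)), sum_split]
  rw [Finset.sum_eq_zero (s := Finset.range n), add_zero]
  · refine Finset.sum_congr rfl fun i hi => ?_
    rw [evS_coeff_even, show 2 * n - 2 * i = 2 * (n - i) by omega, evS_coeff_even]
  · intro i _
    rw [evS_coeff_odd, zero_mul]

/-! coefficients -/

def sC (k : ℕ) : ℚ := -((-1 : ℚ) ^ k * ddf ((k : ℤ) - 1) / (2 ^ k * (Nat.factorial k : ℚ)))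
def pC (k : ℕ) : ℚ := (-1 : ℚ) ^ k * ddf ((k : ℤ) + 1) / (2 ^ k * (Nat.factorial k : ℚ))

lemma ddf_nat (k : ℕ) : ddf (k : ℤ) = odFact k := by simp [ddf]

lemma ddf_neg_one : ddf (-1) = -1 := by simp [ddf, odFact]

lemma sC_zero : sC 0 = 1 := by simp [sC, ddf_neg_one]

lemma sC_succ (k : ℕ) : (2 * k + 2) * sC (k + 1) = (1 - 2 * k) * sC k := by
  cases k with
  | zero =>
    have : ddf (0 : ℤ) = 1 := by simp [ddf, odFact]
    rw [sC_zero]; norm_num [sC, this]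
  | succ k =>
    have h1 : ((k + 1 + 1 : ℕ) : ℤ) - 1 = ((k + 1 : ℕ) : ℤ) := by push_cast; ring
    have h2 : ((k + 1 : ℕ) : ℤ) - 1 = (k : ℤ) := by push_cast; ring
    have h3 : (Nat.factorial (k + 1) : ℚ) ≠ 0 := by positivity
    rw [sC, sC, h1, h2, ddf_nat, ddf_nat, odFact, Nat.factorial_succ (k + 1)]
    push_cast
    field_simp
    ring

lemma pC_zero : pC 0 = 1 := by
  have : ddf (1 : ℤ) = 1 := by simp [ddf, odFact]
  simp [pC, this]

lemma pC_succ (k : ℕ) : (2 * k + 2) * pC (k + 1) = -(2 * k + 3) * pC k := by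
  have h1 : ((k + 1 : ℕ) : ℤ) + 1 = ((k + 2 : ℕ) : ℤ) := by push_cast; ring
  have h2 : (k : ℤ) + 1 = ((k + 1 : ℕ) : ℤ) := by push_cast; ring
  have h3 : (Nat.factorial k : ℚ) ≠ 0 := by positivity
  rw [pC, pC, h1, h2, ddf_nat, ddf_nat, odFact, Nat.factorial_succ]
  push_cast
  field_simp
  ring

def sS : ℚ⟦X⟧ := evS sC
def pS : ℚ⟦X⟧ := evS pC

lemma ode_aux (a : ℕ → ℚ) (c : ℚ) (h : ∀ k : ℕ, (2 * k + 2) * a (k + 1) = (c - 2 * k) * a k) :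
    (1 + X ^ 2) * dX (evS a) = C c * X * evS a := by
  have hX : (X : ℚ⟦X⟧) ≠ 0 := X_ne_zero
  apply mul_left_cancel₀ hX
  have h1 : X * ((1 + X ^ 2) * dX (evS a)) = X * dX (evS a) + X ^ 2 * (X * dX (evS a)) := by ring
  have h2 : X * (C c * X * evS a) = C c * (X ^ 2 * evS a) := by ring
  rw [h1, h2, evS_theta,
    evS_shift (fun k => 2 * (k : ℚ) * a k)
      (fun k => if k = 0 then 0 else 2 * ((k : ℚ) - 1) * a (k - 1)) (by simp) (by simp),
    evS_shift a (fun k => if k = 0 then 0 else a (k - 1)) (by simp) (by simp),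
    evS_add, evS_smul]
  congr 1
  funext k
  cases k with
  | zero => simp
  | succ k =>
    have := h k
    simp
    linear_combination this

lemma sS_ode : (1 + X ^ 2) * dX sS = X * sS := by
  have := ode_aux sC 1 sC_succ
  rw [map_one, one_mul] at this
  exact this

lemma pS_ode : (1 + X ^ 2) * dX pS = C (-3) * X * pS :=
  ode_aux pC (-3) (fun k => by rw [pC_succ]; ring)

lemma cc_evS (a : ℕ → ℚ) : constantCoeff (evS a) = a 0 := by
  simpa using evS_coeff_even a 0

lemma dX_mul (f g : ℚ⟦X⟧) : dX (f * g) = f * dX g + g * dX f := by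
  simp [dX, Derivation.leibniz]

lemma dX_pow (f : ℚ⟦X⟧) (n : ℕ) : dX (f ^ n) = n * f ^ (n - 1) * dX f := by
  simp [dX, mul_assoc]

lemma dX_add (f g : ℚ⟦X⟧) : dX (f + g) = dX f + dX g := by simp [dX]
lemma dX_sub (f g : ℚ⟦X⟧) : dX (f - g) = dX f - dX g := by simp [dX]
lemma dX_neg (f : ℚ⟦X⟧) : dX (-f) = - dX f := by simp [dX]
lemma dX_X : dX X = 1 := by simp [dX]
lemma dX_one : dX 1 = 0 := by simp [dX]
lemma dX_nat (n : ℕ) : dX (n : ℚ⟦X⟧) = 0 := by simp [dX]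
lemma one_add_ne : (1 + X ^ 2 : ℚ⟦X⟧) ≠ 0 := by
  intro h
  have := congrArg constantCoeff h
  simp at this

lemma C_neg_three : (C (-3 : ℚ) : ℚ⟦X⟧) = -3 := by
  rw [map_neg, map_ofNat]

lemma cc_sS : constantCoeff sS = 1 := by rw [sS, cc_evS, sC_zero]
lemma cc_pS : constantCoeff pS = 1 := by rw [pS, cc_evS, pC_zero]

lemma s3p : sS ^ 3 * pS = 1 := by
  apply PowerSeries.derivative.ext
  · show dX _ = dX _
    apply mul_left_cancel₀ one_add_ne
    have h1 := sS_ode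
    have h2 := pS_ode
    rw [C_neg_three] at h2
    rw [dX_mul, dX_pow, dX_one]
    push_cast
    linear_combination sS ^ 3 * h2 + 3 * pS * sS ^ 2 * h1
  · simp [cc_sS, cc_pS]

lemma s_sq : sS ^ 2 = 1 + X ^ 2 := by
  -- s² = (1+x²) since (1+x²) s p · ... has zero derivative
  have key : (1 + X ^ 2) * (sS * pS) = 1 := by
    apply PowerSeries.derivative.ext
    · show dX _ = dX _
      apply mul_left_cancel₀ one_add_ne
      have h1 := sS_ode
      have h2 := pS_ode
      rw [C_neg_three] at h2
      rw [dX_mul, dX_mul, dX_add, dX_pow, dX_one, dX_X]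
      push_cast
      linear_combination (1 + X ^ 2) * sS * h2 + (1 + X ^ 2) * pS * h1
    · simp [cc_sS, cc_pS]
  linear_combination (1 + X ^ 2) * s3p - sS ^ 2 * key

def rS : ℚ⟦X⟧ := sS ^ 2 * pS

lemma s_r : sS * rS = 1 := by rw [rS]; linear_combination s3p

lemma r_rel : X ^ 2 * rS ^ 2 + rS ^ 2 - 1 = 0 := by
  linear_combination (sS * rS + 1) * s_r - rS ^ 2 * s_sq

lemma s_eq : sS = (1 + X ^ 2) * rS := by
  linear_combination rS * s_sq - sS * s_r

lemma p_eq : pS = rS ^ 3 := by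
  linear_combination (-(sS ^ 2 * rS ^ 2 + sS * rS + 1) * pS) * s_r + rS ^ 3 * s3p

lemma ds : dX sS = X * rS := by
  apply mul_left_cancel₀ one_add_ne
  linear_combination sS_ode + X * s_eq

lemma s_ne : sS ≠ 0 := by
  intro h; have := s_r; rw [h] at this; simp at this

lemma dr : dX rS = - (X * rS ^ 3) := by
  have h := congrArg dX s_r
  rw [dX_mul, dX_one, ds] at h
  apply mul_left_cancel₀ s_ne
  linear_combination h + X * rS ^ 2 * s_r

def aS : ℚ⟦X⟧ := PowerSeries.mk fun k => coeff (k - 1) rS / k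

lemma da : dX aS = rS := by
  ext k
  rw [coeff_derivative, aS, coeff_mk]
  have : (k : ℚ) + 1 ≠ 0 := by positivity
  simp
  field_simp

lemma cc_a : constantCoeff aS = 0 := by
  rw [← coeff_zero_eq_constantCoeff_apply, aS, coeff_mk]; simp

lemma a_ne : aS ≠ 0 := by
  intro h
  have := da
  rw [h] at this
  have h2 := s_r
  rw [← this] at h2
  simp [dX] at h2

/-! the family h_m -/

def tc (n m : ℕ) : ℚ := if m ≤ n then (-4 : ℚ) ^ (n - m) * (T2 n m : ℚ) else 0

lemma T2_gt (n m : ℕ) (h : n < m) : T2 n m = 0 := by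
  induction n generalizing m with
  | zero => cases m with
    | zero => omega
    | succ m => simp [T2]
  | succ n ih => cases m with
    | zero => omega
    | succ m => simp [T2, ih m (by omega), ih (m + 1) (by omega)]

lemma tc_succ (n m : ℕ) : tc (n + 1) (m + 1) = tc n m - 4 * (n : ℚ) ^ 2 * tc n (m + 1) := by
  unfold tc
  rcases lt_trichotomy m n with h | h | h
  · rw [if_pos (by omega), if_pos (by omega), if_pos (by omega), T2]
    obtain ⟨d, rfl⟩ : ∃ d, n = m + 1 + d := ⟨n - m - 1, by omega⟩
    rw [show m + 1 + d + 1 - (m + 1) = d + 1 by omega, show m + 1 + d - m = d + 1 by omega,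
      show m + 1 + d - (m + 1) = d by omega]
    push_cast; ring
  · subst h
    rw [if_pos (by omega), if_pos (by omega), if_neg (by omega), T2, T2_gt m (m + 1) (by omega)]
    simp
  · rw [if_neg (by omega), if_neg (by omega), if_neg (by omega)]; simp

lemma tc_succ_zero (n : ℕ) : tc (n + 1) 0 = 0 := by simp [tc, T2]
lemma tc_zero_zero : tc 0 0 = 1 := by simp [tc, T2]
lemma tc_zero_succ (m : ℕ) : tc 0 (m + 1) = 0 := by simp [tc]
lemma tc_gt (n m : ℕ) (h : n < m) : tc n m = 0 := by rw [tc, if_neg (by omega)]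

def hS (m : ℕ) : ℚ⟦X⟧ := evS fun n => tc n m / (Nat.factorial (2 * n) : ℚ)

lemma fact_succ (k : ℕ) : (Nat.factorial (2 * (k + 1)) : ℚ) =
    (2 * k + 2) * (2 * k + 1) * (Nat.factorial (2 * k) : ℚ) := by
  rw [show 2 * (k + 1) = 2 * k + 1 + 1 by ring, Nat.factorial_succ, Nat.factorial_succ]
  push_cast; ring

lemma hS_ode (m : ℕ) : dX (dX (hS (m + 1))) + X * dX (X * dX (hS (m + 1))) = hS m := by
  rw [hS, evS_theta, evS_theta, evS_dd, evS_add, hS]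
  congr 1
  funext k
  rw [fact_succ, tc_succ]
  have : (Nat.factorial (2 * k) : ℚ) ≠ 0 := by positivity
  field_simp
  ring

lemma hS_zero : hS 0 = 1 := by
  refine ps_ext (fun n => ?_) (fun n => ?_)
  · rw [hS, evS_coeff_even]
    cases n with
    | zero => simp [tc_zero_zero]
    | succ n => rw [tc_succ_zero, coeff_one]; simp
  · rw [hS, evS_coeff_odd, coeff_one]; simp

def DS (f : ℚ⟦X⟧) : ℚ⟦X⟧ := sS * dX f

lemma DS_DS (f : ℚ⟦X⟧) : DS (DS f) = dX (dX f) + X * dX (X * dX f) := by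
  rw [DS, DS, dX_mul, dX_mul, ds, dX_X]
  linear_combination (dX (dX f)) * s_sq + X * dX f * s_r

lemma DS_h (m : ℕ) : DS (DS (hS (m + 1))) = hS m := by rw [DS_DS, hS_ode]

lemma DS_eq_zero {f : ℚ⟦X⟧} (h : DS f = 0) (h0 : constantCoeff f = 0) : f = 0 := by
  apply PowerSeries.derivative.ext
  · have h' : dX f = 0 := (mul_eq_zero.mp h).resolve_left s_ne
    simpa [dX] using h'
  · simpa using h0

lemma DS_a : DS aS = 1 := by rw [DS, da, s_r]
lemma DS_mul (f g : ℚ⟦X⟧) : DS (f * g) = f * DS g + g * DS f := by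
  rw [DS, dX_mul, DS, DS]; ring
lemma DS_add (f g : ℚ⟦X⟧) : DS (f + g) = DS f + DS g := by rw [DS, dX_add, DS, DS]; ring
lemma DS_sub (f g : ℚ⟦X⟧) : DS (f - g) = DS f - DS g := by rw [DS, dX_sub, DS, DS]; ring
lemma DS_one : DS 1 = 0 := by rw [DS, dX_one, mul_zero]
lemma DS_nat (n : ℕ) : DS (n : ℚ⟦X⟧) = 0 := by rw [DS, dX_nat, mul_zero]

lemma cc_dX_evS (a : ℕ → ℚ) : constantCoeff (dX (evS a)) = 0 := by
  rw [← coeff_zero_eq_constantCoeff_apply, coeff_derivative]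
  have := evS_coeff_odd a 0
  simp at this
  simp [this]

lemma h_euler (m : ℕ) : aS * DS (hS m) = ((2 * m : ℕ) : ℚ⟦X⟧) * hS m := by
  induction m with
  | zero => rw [hS_zero, DS_one]; simp
  | succ m ih =>
    have hc : constantCoeff (DS (hS (m + 1))) = 0 := by
      rw [DS, hS, map_mul, cc_dX_evS, mul_zero]
    have hc1 : constantCoeff (hS (m + 1)) = 0 := by
      rw [hS, cc_evS, tc_zero_succ]; simp
    have h1 : DS (aS * DS (hS (m + 1)) - ((2 * (m + 1) : ℕ) : ℚ⟦X⟧) * hS (m + 1)) = 0 := by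
      apply DS_eq_zero
      · rw [DS_sub, DS_mul, DS_mul, DS_h, DS_a, DS_nat, DS_sub, DS_add, DS_mul, DS_mul, DS_a,
          DS_add, DS_mul, DS_one, DS_mul, DS_nat, DS_h, mul_zero, ih]
        have h0 : DS 0 = 0 := by simp [DS, dX]
        rw [h0]
        push_cast
        ring
      · rw [DS_sub, DS_mul, DS_mul, DS_h, DS_a, DS_nat]
        simp [hc, cc_a]
    have := DS_eq_zero h1 (by simp [hc1, hc, cc_a])
    linear_combination this

/-! G -/

def gS : ℚ⟦X⟧ := evS fun n => cauchy2 n / (Nat.factorial (2 * n) : ℚ)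

lemma cauchy2_eq (n N : ℕ) (h : n < N) :
    cauchy2 n = ∑ m ∈ Finset.range N, tc n m / (2 * (m : ℚ) + 1) := by
  rw [cauchy2, ← Finset.sum_subset (Finset.range_mono (show n + 1 ≤ N from h))]
  · refine Finset.sum_congr rfl fun m hm => ?_
    rw [tc, if_pos (by simpa [Nat.lt_succ_iff] using hm)]
  · intro m _ hm
    rw [tc_gt n m (by simpa using hm), zero_div]

lemma tc_sum (n N : ℕ) (h : n < N) :
    ∑ m ∈ Finset.range N, tc n m = sC n * (Nat.factorial (2 * n) : ℚ) := by
  induction n generalizing N with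
  | zero =>
    obtain ⟨N, rfl⟩ : ∃ M, N = M + 1 := ⟨N - 1, by omega⟩
    rw [Finset.sum_range_succ']
    simp [tc_zero_zero, tc_zero_succ, sC_zero]
  | succ n ih =>
    obtain ⟨N, rfl⟩ : ∃ M, N = M + 1 := ⟨N - 1, by omega⟩
    rw [Finset.sum_range_succ', tc_succ_zero, add_zero]
    simp_rw [tc_succ]
    rw [Finset.sum_sub_distrib, ← Finset.mul_sum, ih N (by omega)]
    have h2 := ih (N + 1) (by omega)
    rw [Finset.sum_range_succ'] at h2
    have h3 := sC_succ n
    have h4 : (n : ℚ) ^ 2 * tc n 0 = 0 := by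
      cases n with
      | zero => simp
      | succ n => simp [tc_succ_zero]
    rw [fact_succ]
    linear_combination (-(4 * (n : ℚ) ^ 2)) * h2 + 4 * h4 -
      (2 * n + 1) * (Nat.factorial (2 * n) : ℚ) * h3

lemma evS_sum (N : ℕ) (a : ℕ → ℕ → ℚ) :
    ∑ m ∈ Finset.range N, evS (a m) = evS (fun k => ∑ m ∈ Finset.range N, a m k) := by
  refine ps_ext (fun n => ?_) (fun n => ?_) <;>
  simp [evS_coeff_even, evS_coeff_odd]

lemma evS_dvd (a b : ℕ → ℚ) (N : ℕ) (h : ∀ k < N, a k = b k) :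
    ∃ q, evS a - evS b = X ^ N * q := by
  have : X ^ N ∣ evS a - evS b := by
    rw [X_pow_dvd_iff]
    intro k hk
    rcases Nat.even_or_odd' k with ⟨m, rfl | rfl⟩
    · rw [map_sub, evS_coeff_even, evS_coeff_even, h m (by omega), sub_self]
    · rw [map_sub, evS_coeff_odd, evS_coeff_odd, sub_self]
  exact this

def gM (N : ℕ) : ℚ⟦X⟧ := ∑ m ∈ Finset.range N, C (1 / (2 * (m : ℚ) + 1)) * hS m

lemma gM_eq (N : ℕ) : gM N + aS * DS (gM N) = ∑ m ∈ Finset.range N, hS m := by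
  induction N with
  | zero => simp [gM, DS, dX]
  | succ N ih =>
    have h1 : gM (N + 1) = gM N + C (1 / (2 * (N : ℚ) + 1)) * hS N := by
      rw [gM, Finset.sum_range_succ, gM]
    have h2 : DS (C (1 / (2 * (N : ℚ) + 1))) = 0 := by simp [DS, dX]
    have h3 : (C (1 / (2 * (N : ℚ) + 1)) : ℚ⟦X⟧) * (2 * (N : ℚ⟦X⟧) + 1) = 1 := by
      have e : (2 * (N : ℚ⟦X⟧) + 1) = C (2 * (N : ℚ) + 1) := by
        rw [map_add, map_mul, map_ofNat, map_natCast, map_one]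
      have : 2 * (N : ℚ) + 1 ≠ 0 := by positivity
      rw [e, ← map_mul, one_div, inv_mul_cancel₀ this, map_one]
    have h4 := h_euler N
    push_cast at h4
    rw [Finset.sum_range_succ, ← ih, h1, DS_add, DS_mul, h2]
    linear_combination C (1 / (2 * (N : ℚ) + 1)) * h4 + hS N * h3

lemma g_eq : gS + aS * DS gS = sS := by
  have key : ∀ N, ∃ q, gS + aS * DS gS - sS = X ^ N * q := by
    intro N
    obtain ⟨q1, h1⟩ : ∃ q, gS - gM (N + 1) = X ^ (N + 1) * q := by
      have : gM (N + 1) = evS (fun k => ∑ m ∈ Finset.range (N + 1),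
          (1 / (2 * (m : ℚ) + 1)) * (tc k m / (Nat.factorial (2 * k) : ℚ))) := by
        rw [gM, ← evS_sum]
        refine Finset.sum_congr rfl fun m _ => ?_
        rw [hS, evS_smul]
      rw [this, gS]
      apply evS_dvd
      intro k hk
      rw [cauchy2_eq k (N + 1) hk, Finset.sum_div]
      refine Finset.sum_congr rfl fun m _ => ?_
      ring
    obtain ⟨q2, h2⟩ : ∃ q, sS - ∑ m ∈ Finset.range (N + 1), hS m = X ^ (N + 1) * q := by
      simp only [hS]
      rw [evS_sum, sS]
      apply evS_dvd
      intro k hk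
      rw [← Finset.sum_div, tc_sum k (N + 1) hk]
      have : (Nat.factorial (2 * k) : ℚ) ≠ 0 := by positivity
      field_simp
    have h3 := congrArg DS h1
    rw [DS_sub, DS_mul] at h3
    have h4 : DS (X ^ (N + 1)) = sS * (((N + 1 : ℕ) : ℚ⟦X⟧) * X ^ N) := by
      rw [DS, dX_pow, dX_X]; simp
    rw [h4] at h3
    have h5 := gM_eq (N + 1)
    refine ⟨X * q1 + aS * (X * DS q1 + q1 * sS * ((N + 1 : ℕ) : ℚ⟦X⟧)) - X * q2, ?_⟩
    linear_combination h1 + aS * h3 + h5 - h2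
  have : gS + aS * DS gS - sS = 0 := by
    ext k
    have hd : X ^ (k + 1) ∣ gS + aS * DS gS - sS := key (k + 1)
    rw [X_pow_dvd_iff] at hd
    rw [hd k (by omega)]; simp
  linear_combination this

lemma g_a : gS * aS = X := by
  apply PowerSeries.derivative.ext
  · show dX _ = dX _
    rw [dX_X, dX_mul, da]
    have := g_eq
    rw [DS] at this
    apply mul_left_cancel₀ s_ne
    linear_combination this + gS * s_r
  · simp [cc_a]


lemma step (f p p' : ℚ⟦X⟧) (k : ℕ) (h : f * aS ^ (k + 1) = p) (hp : dX p = p') :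
    dX f * aS ^ (k + 2) = aS * p' - (k + 1) * rS * p := by
  have h1 := congrArg dX h
  rw [dX_mul, dX_pow, da, hp] at h1
  push_cast at h1
  linear_combination aS * h1 - (k + 1) * rS * h

lemma main_id :
    30 * (dX (dX gS)) ^ 2 =
      -(5 * (dX (dX (dX (dX gS))) * (X * dX sS)) + (X * dX (dX (dX (dX (dX gS))))) * sS
        + 5 * (dX (dX (dX (dX gS))) * sS))
      - 10 * (3 * ((X * dX (dX (dX gS))) * pS) + dX (dX gS) * pS)
      - (20 * ((X * dX (X * dX (X * dX gS))) * pS) - 55 * ((X * dX (X * dX gS)) * pS)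
        + 36 * ((X * dX gS) * pS) - gS * pS) := by
  have n2 : dX (2 : ℚ⟦X⟧) = 0 := by exact_mod_cast dX_nat 2
  have n3 : dX (3 : ℚ⟦X⟧) = 0 := by exact_mod_cast dX_nat 3
  have n4 : dX (4 : ℚ⟦X⟧) = 0 := by exact_mod_cast dX_nat 4
  have n6 : dX (6 : ℚ⟦X⟧) = 0 := by exact_mod_cast dX_nat 6
  have n15 : dX (15 : ℚ⟦X⟧) = 0 := by exact_mod_cast dX_nat 15
  have n21 : dX (21 : ℚ⟦X⟧) = 0 := by exact_mod_cast dX_nat 21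
  have n24 : dX (24 : ℚ⟦X⟧) = 0 := by exact_mod_cast dX_nat 24
  have n30 : dX (30 : ℚ⟦X⟧) = 0 := by exact_mod_cast dX_nat 30
  have n32 : dX (32 : ℚ⟦X⟧) = 0 := by exact_mod_cast dX_nat 32
  have n36 : dX (36 : ℚ⟦X⟧) = 0 := by exact_mod_cast dX_nat 36
  have g0 : gS * aS ^ (0 + 1) = X := by simpa using g_a
  have g1 := step _ _ _ _ g0 dX_X
  have g1 : dX gS * aS ^ (1 + 1) = 1 * aS - 1 * X * rS := by
    linear_combination g1
  have g2 := step _ _ _ _ g1 rfl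
  have g2 : dX (dX gS) * aS ^ (2 + 1) = 1 * aS * X ^ 2 * rS ^ 3 - 2 * aS * rS + 2 * X * rS ^ 2 := by
    rw [g2]
    simp only [dX_add, dX_sub, dX_neg, dX_mul, dX_pow, dX_X, dX_one, n2, n3, n4, n6, n15, n21, n24, n30, n32, n36, da, dr]
    push_cast
    ring
  have g3 := step _ _ _ _ g2 rfl
  have g3 : dX (dX (dX gS)) * aS ^ (3 + 1) = -(6 * aS * X ^ 2 * rS ^ 4) + 4 * aS ^ 2 * X * rS ^ 3 - 3 * aS ^ 2 * X ^ 3 * rS ^ 5 + 6 * aS * rS ^ 2 - 6 * X * rS ^ 3 := by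
    rw [g3]
    simp only [dX_add, dX_sub, dX_neg, dX_mul, dX_pow, dX_X, dX_one, n2, n3, n4, n6, n15, n21, n24, n30, n32, n36, da, dr]
    push_cast
    ring
  have g4 := step _ _ _ _ g3 rfl
  have g4 : dX (dX (dX (dX gS))) * aS ^ (4 + 1) = 36 * aS * X ^ 2 * rS ^ 5 - 32 * aS ^ 2 * X * rS ^ 4 + 30 * aS ^ 2 * X ^ 3 * rS ^ 6 + 4 * aS ^ 3 * rS ^ 3 - 21 * aS ^ 3 * X ^ 2 * rS ^ 5 + 15 * aS ^ 3 * X ^ 4 * rS ^ 7 - 24 * aS * rS ^ 3 + 24 * X * rS ^ 4 := by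
    rw [g4]
    simp only [dX_add, dX_sub, dX_neg, dX_mul, dX_pow, dX_X, dX_one, n2, n3, n4, n6, n15, n21, n24, n30, n32, n36, da, dr]
    push_cast
    ring
  have g5 := step _ _ _ _ g4 rfl
  have g5 : dX (dX (dX (dX (dX gS)))) * aS ^ (5 + 1) = -(240 * aS * X ^ 2 * rS ^ 6) + 240 * aS ^ 2 * X * rS ^ 5 - 270 * aS ^ 2 * X ^ 3 * rS ^ 7 - 40 * aS ^ 3 * rS ^ 4 + 260 * aS ^ 3 * X ^ 2 * rS ^ 6 - 210 * aS ^ 3 * X ^ 4 * rS ^ 8 - 54 * aS ^ 4 * X * rS ^ 5 + 165 * aS ^ 4 * X ^ 3 * rS ^ 7 - 105 * aS ^ 4 * X ^ 5 * rS ^ 9 + 120 * aS * rS ^ 4 - 120 * X * rS ^ 5 := by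
    rw [g5]
    simp only [dX_add, dX_sub, dX_neg, dX_mul, dX_pow, dX_X, dX_one, n2, n3, n4, n6, n15, n21, n24, n30, n32, n36, da, dr]
    push_cast
    ring
  have hr := r_rel
  rw [ds, s_eq, p_eq]
  simp only [dX_mul, dX_add, dX_X, dX_one, mul_one]
  generalize dX (dX (dX (dX (dX gS)))) = G5 at *
  generalize dX (dX (dX (dX gS))) = G4 at *
  generalize dX (dX (dX gS)) = G3 at *
  generalize dX (dX gS) = G2 at *
  generalize dX gS = G1 at *
  generalize gS = G0 at *
  have ha : aS ^ 6 ≠ 0 := pow_ne_zero _ a_ne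
  apply mul_left_cancel₀ ha
  linear_combination (X * (1 + X ^ 2) * rS) * g5 + (5 * aS * (X ^ 2 * rS) + 5 * aS * (1 + X ^ 2) * rS) * g4 + (aS ^ 2 * rS ^ 3 * (30 * X + 20 * X ^ 3)) * g3 + (aS ^ 3 * rS ^ 3 * (10 + 60 * X ^ 2 - 55 * X ^ 2) + 30 * (G2 * aS ^ 3 + (1 * aS * X ^ 2 * rS ^ 3 - 2 * aS * rS + 2 * X * rS ^ 2))) * g2 + (aS ^ 4 * rS ^ 3 * (20 * X - 55 * X + 36 * X)) * g1 + (-(aS ^ 5 * rS ^ 3)) * g0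
    + (-(105 * aS ^ 4 * X ^ 6 * rS ^ 8) + 150 * aS ^ 4 * X ^ 4 * rS ^ 6 - 29 * aS ^ 4 * X ^ 2 * rS ^ 4 - 210 * aS ^ 3 * X ^ 5 * rS ^ 7 + 230 * aS ^ 3 * X ^ 3 * rS ^ 5 - 270 * aS ^ 2 * X ^ 4 * rS ^ 6 + 240 * aS ^ 2 * X ^ 2 * rS ^ 4 - 120 * aS ^ 2 * rS ^ 2 - 240 * aS * X ^ 3 * rS ^ 5 + 240 * aS * X * rS ^ 3 - 120 * X ^ 2 * rS ^ 4) * hr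

lemma final_coeff (n : ℕ) (a b : ℕ → ℚ) (k : ℚ) :
    coeff (2 * n) (C k * (evS a * evS b)) =
      ∑ l ∈ Finset.range (n + 1), k * (a l * b (n - l)) := by
  rw [coeff_C_mul, evS_mul_coeff, Finset.mul_sum]

lemma g_two (a : ℕ → ℚ) :
    dX (dX (evS fun n => a n / (Nat.factorial (2 * n) : ℚ))) =
      evS fun n => a (n + 1) / (Nat.factorial (2 * n) : ℚ) := by
  rw [evS_dd]
  congr 1
  funext k
  rw [fact_succ]
  have : (Nat.factorial (2 * k) : ℚ) ≠ 0 := by positivity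
  field_simp

lemma coeff_id (n : ℕ) :
    30 * ∑ l ∈ Finset.range (n + 1), (cauchy2 (l + 1) / (Nat.factorial (2 * l) : ℚ)) *
        (cauchy2 (n - l + 1) / (Nat.factorial (2 * (n - l)) : ℚ)) =
      (∑ l ∈ Finset.range (n + 1), -(10 * (n : ℚ) - 8 * l + 5) * sC (n - l) *
        (cauchy2 (l + 2) / (Nat.factorial (2 * l) : ℚ)))
      - 10 * (∑ l ∈ Finset.range (n + 1), (6 * (l : ℚ) + 1) * pC (n - l) *
        (cauchy2 (l + 1) / (Nat.factorial (2 * l) : ℚ)))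
      - ∑ l ∈ Finset.range (n + 1),
        (160 * (l : ℚ) ^ 3 - 220 * (l : ℚ) ^ 2 + 72 * (l : ℚ) - 1) * pC (n - l) *
        (cauchy2 l / (Nat.factorial (2 * l) : ℚ)) := by
  have h := main_id
  have e2 : dX (dX gS) = evS fun n => cauchy2 (n + 1) / (Nat.factorial (2 * n) : ℚ) := g_two _
  have e4 : dX (dX (dX (dX gS))) =
      evS fun n => cauchy2 (n + 2) / (Nat.factorial (2 * n) : ℚ) := by
    rw [e2]; exact g_two (fun n => cauchy2 (n + 1))
  rw [e4, e2, gS, sS, pS] at h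
  simp only [evS_theta] at h
  have c30 : (30 : ℚ⟦X⟧) = C 30 := by rw [map_ofNat]
  have c5 : (5 : ℚ⟦X⟧) = C 5 := by rw [map_ofNat]
  have c10 : (10 : ℚ⟦X⟧) = C 10 := by rw [map_ofNat]
  have c3 : (3 : ℚ⟦X⟧) = C 3 := by rw [map_ofNat]
  have c20 : (20 : ℚ⟦X⟧) = C 20 := by rw [map_ofNat]
  have c55 : (55 : ℚ⟦X⟧) = C 55 := by rw [map_ofNat]
  have c36 : (36 : ℚ⟦X⟧) = C 36 := by rw [map_ofNat]
  rw [c30, c5, c10, c3, c20, c55, c36, pow_two] at h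
  have h := congrArg (coeff (2 * n)) h
  simp only [map_add, map_sub, map_neg, coeff_C_mul, evS_mul_coeff] at h
  rw [h]
  simp only [Finset.mul_sum, ← Finset.sum_add_distrib, ← Finset.sum_sub_distrib,
    ← Finset.sum_neg_distrib]
  refine Finset.sum_congr rfl fun l hl => ?_
  have hl : l ≤ n := by simpa [Nat.lt_succ_iff] using hl
  rw [Nat.cast_sub hl]
  ring

end

theorem statement4 (n : ℕ) :
    ∑ i ∈ Finset.range (n + 1),
        (Nat.choose (2 * n) (2 * i) : ℚ) * cauchy2 (i + 1) * cauchy2 (n - i + 1) =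
    (Nat.factorial (2 * n) : ℚ) / 30 * ∑ l ∈ Finset.range (n + 1),
        (-1 : ℚ) ^ (n - l) * (10 * (n : ℚ) - 8 * (l : ℚ) + 5) * ddf ((n : ℤ) - l - 1) /
          ((2 : ℚ) ^ (n - l) * (Nat.factorial (n - l) : ℚ) * (Nat.factorial (2 * l) : ℚ)) *
          cauchy2 (l + 2)
    - (Nat.factorial (2 * n) : ℚ) / 3 * ∑ l ∈ Finset.range (n + 1),
        (-1 : ℚ) ^ (n - l) * (6 * (l : ℚ) + 1) * ddf ((n : ℤ) - l + 1) /
          ((2 : ℚ) ^ (n - l) * (Nat.factorial (n - l) : ℚ) * (Nat.factorial (2 * l) : ℚ)) *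
          cauchy2 (l + 1)
    - (Nat.factorial (2 * n) : ℚ) / 30 * ∑ l ∈ Finset.range (n + 1),
        (-1 : ℚ) ^ (n - l) *
          (160 * (l : ℚ) ^ 3 - 220 * (l : ℚ) ^ 2 + 72 * (l : ℚ) - 1) * ddf ((n : ℤ) - l + 1) /
          ((2 : ℚ) ^ (n - l) * (Nat.factorial (n - l) : ℚ) * (Nat.factorial (2 * l) : ℚ)) *
          cauchy2 l := by
  have h := coeff_id n
  have hf : (Nat.factorial (2 * n) : ℚ) ≠ 0 := by positivity
  have e1 : ∑ i ∈ Finset.range (n + 1),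
        (Nat.choose (2 * n) (2 * i) : ℚ) * cauchy2 (i + 1) * cauchy2 (n - i + 1) =
      (Nat.factorial (2 * n) : ℚ) / 30 * (30 * ∑ l ∈ Finset.range (n + 1),
        (cauchy2 (l + 1) / (Nat.factorial (2 * l) : ℚ)) *
        (cauchy2 (n - l + 1) / (Nat.factorial (2 * (n - l)) : ℚ))) := by
    rw [Finset.mul_sum, Finset.mul_sum]
    refine Finset.sum_congr rfl fun l hl => ?_
    have hl : l ≤ n := by simpa [Nat.lt_succ_iff] using hl
    rw [Nat.cast_choose ℚ (show 2 * l ≤ 2 * n by omega),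
      show 2 * n - 2 * l = 2 * (n - l) by omega]
    have h1 : (Nat.factorial (2 * l) : ℚ) ≠ 0 := by positivity
    have h2 : (Nat.factorial (2 * (n - l)) : ℚ) ≠ 0 := by positivity
    field_simp
  rw [e1, h, mul_sub, mul_sub]
  congr 1
  · congr 1
    · congr 1
      refine Finset.sum_congr rfl fun l hl => ?_
      have hl : l ≤ n := by simpa [Nat.lt_succ_iff] using hl
      rw [sC, Nat.cast_sub hl]
      have h1 : (Nat.factorial (2 * l) : ℚ) ≠ 0 := by positivity
      have h2 : (Nat.factorial (n - l) : ℚ) ≠ 0 := by positivity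
      field_simp
    · rw [← mul_assoc, show (Nat.factorial (2 * n) : ℚ) / 30 * 10 =
        (Nat.factorial (2 * n) : ℚ) / 3 by ring]
      congr 1
      refine Finset.sum_congr rfl fun l hl => ?_
      have hl : l ≤ n := by simpa [Nat.lt_succ_iff] using hl
      rw [pC, Nat.cast_sub hl]
      have h1 : (Nat.factorial (2 * l) : ℚ) ≠ 0 := by positivity
      have h2 : (Nat.factorial (n - l) : ℚ) ≠ 0 := by positivity
      field_simp
  · congr 1
    refine Finset.sum_congr rfl fun l hl => ?_
    have hl : l ≤ n := by simpa [Nat.lt_succ_iff] using hl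
    rw [pC, Nat.cast_sub hl]
    have h1 : (Nat.factorial (2 * l) : ℚ) ≠ 0 := by positivity
    have h2 : (Nat.factorial (n - l) : ℚ) ≠ 0 := by positivity
    field_simp
end

section
/- For every integer n ≥ 2, the five-fold convolution ∑_{i₁+⋯+i₅=n, iⱼ≥0} (2n)!/((2i₁)!⋯(2i₅)!) · 𝔠_{2i₁}⋯𝔠_{2i₅} = binom(2n-1, 4) · 𝔠_{2n} + (4n²-16n+17)/3 · binom(2n, 2) binom(2n-3, 2) · 𝔠_{2n-2} + binom(2n, 4)(2n-5)⁴ · 𝔠_{2n-4}. -/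
open PowerSeries in
theorem coeff_pow_tuple (H : PowerSeries ℚ) (k n : ℕ) :
    coeff n (H ^ k) = ∑ x ∈ Finset.Nat.antidiagonalTuple k n, ∏ j, coeff (x j) H := by
  have h := PowerSeries.coeff_prod (fun _ : Fin k => H) n Finset.univ
  simp only [Finset.prod_const, Finset.card_univ, Fintype.card_fin] at h
  rw [h]
  refine Finset.sum_bij' (fun l _ => (l : Fin k → ℕ)) (fun x _ => Finsupp.equivFunOnFinite.symm x)
    ?_ ?_ ?_ ?_ ?_
  · intro l hl
    simpa [Finset.mem_finsuppAntidiag, Finset.Nat.mem_antidiagonalTuple] using hl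
  · intro x hx
    simpa [Finset.mem_finsuppAntidiag, Finset.Nat.mem_antidiagonalTuple] using hx
  · intro l hl
    simp
  · intro l hl
    simp
  · intro l hl
    rfl

/-- coefficients of `(1+t^2)^(-1/2)` -/
def wc : ℕ → ℚ
  | 0 => 1
  | 1 => 0
  | k + 2 => -((k : ℚ) + 1) / (k + 2) * wc k

noncomputable def wS : PowerSeries ℚ := PowerSeries.mk wc

noncomputable def uS : PowerSeries ℚ := PowerSeries.mk fun k => wc (k - 1) * (if k = 0 then 0 else 1 / (k : ℚ))

open PowerSeries

theorem D_uS : d⁄dX ℚ uS = wS := by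
  ext k
  rw [coeff_derivative]
  simp only [uS, wS, coeff_mk]
  have : (k : ℚ) + 1 ≠ 0 := by positivity
  simp
  field_simp

theorem D_wS : (1 + X ^ 2) * d⁄dX ℚ wS = - (X * wS) := by
  ext k
  rcases k with _ | _ | k
  · simp [wS, wc, add_mul, coeff_derivative, -coeff_zero_eq_constantCoeff, coeff_zero_X_mul, pow_two, mul_assoc]
  · simp [wS, wc, add_mul, pow_two, mul_assoc, coeff_succ_X_mul, coeff_derivative]
    norm_num
  · simp only [add_mul, one_mul, pow_two, mul_assoc, map_add, map_neg, coeff_succ_X_mul, coeff_derivative, wS, coeff_mk]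
    rw [show k + 1 + 1 + 1 = (k + 1) + 2 from rfl, wc]
    have : (k : ℚ) + 1 + 2 ≠ 0 := by positivity
    push_cast
    field_simp
    ring

theorem wS_sq : (1 + X ^ 2) * wS ^ 2 = 1 := by
  apply derivative.ext
  · have h := D_wS
    simp only [Derivation.leibniz, Derivation.leibniz_pow, map_add, derivative_X, smul_eq_mul,
      Derivation.map_one_eq_zero, nsmul_eq_mul]
    push_cast
    linear_combination (2 * wS) * h
  · simp [wS, wc]

/-- `L = (1+t^2) D^2 + t D` -/
noncomputable def Lop (f : PowerSeries ℚ) : PowerSeries ℚ :=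
  (1 + X ^ 2) * d⁄dX ℚ (d⁄dX ℚ f) + X * d⁄dX ℚ f

theorem coeff_Lop (f : PowerSeries ℚ) (k : ℕ) :
    coeff k (Lop f) = (k + 2) * (k + 1) * coeff (k + 2) f + k ^ 2 * coeff k f := by
  rcases k with _ | _ | k
  · simp [Lop, add_mul, coeff_derivative, -coeff_zero_eq_constantCoeff, coeff_zero_X_mul, pow_two, mul_assoc]
    ring
  · simp [Lop, add_mul, pow_two, mul_assoc, coeff_succ_X_mul, coeff_derivative]
    ring
  · simp only [Lop, add_mul, one_mul, pow_two, mul_assoc, map_add, coeff_succ_X_mul, coeff_derivative]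
    push_cast
    ring

theorem Lop_pow (j : ℕ) : Lop (uS ^ (j + 2)) = ((j : PowerSeries ℚ) + 2) * (j + 1) * uS ^ j := by
  have h := D_wS
  have h2 := wS_sq
  have e : d⁄dX ℚ (uS ^ (j + 2)) = ((j : PowerSeries ℚ) + 2) * (uS ^ (j + 1) * wS) := by
    rw [derivative_pow, D_uS]; push_cast; ring
  have e1 : d⁄dX ℚ (uS ^ (j + 1)) = ((j : PowerSeries ℚ) + 1) * (uS ^ j * wS) := by
    rw [derivative_pow, D_uS]; push_cast; ring
  have e2 : d⁄dX ℚ ((j : PowerSeries ℚ) + 2) = 0 := by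
    have := Derivation.map_natCast (d⁄dX ℚ) (j + 2)
    push_cast at this
    exact this
  rw [Lop, e]
  simp only [Derivation.leibniz, smul_eq_mul, e1, e2]
  linear_combination ((j : PowerSeries ℚ) + 2) * uS ^ (j + 1) * h +
    ((j : PowerSeries ℚ) + 2) * (j + 1) * uS ^ j * h2

theorem Lop_one : Lop (uS ^ 1) = 0 := by
  have h := D_wS
  rw [Lop, pow_one, D_uS]
  linear_combination h

theorem coeff_uS_zero : coeff 0 uS = 0 := by simp [uS]

theorem X_dvd_uS : X ∣ uS := by
  rw [X_dvd_iff]; simpa using coeff_uS_zero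

theorem coeff_uS_pow_lt {j k : ℕ} (h : k < j) : coeff k (uS ^ j) = 0 := by
  have := pow_dvd_pow_of_dvd X_dvd_uS j
  exact X_pow_dvd_iff.1 this k h

theorem coeff_E (n : ℕ) : ∀ m : ℕ, coeff (2 * n) (uS ^ (2 * m)) / ((2 * m).factorial : ℚ) =
    (if m ≤ n then (-4 : ℚ) ^ (n - m) * (T2 n m : ℚ) else 0) / ((2 * n).factorial : ℚ) := by
  induction n with
  | zero =>
    intro m
    rcases m with _ | m
    · simp [T2]
    · rw [coeff_uS_pow_lt (by omega)]; simp
  | succ n ih =>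
    intro m
    rcases m with _ | m
    · simp [T2, coeff_one]
    · have h := coeff_Lop (uS ^ (2 * m + 2)) (2 * n)
      rw [Lop_pow] at h
      have hc : coeff (2 * n) ((((2 * m : ℕ) : PowerSeries ℚ) + 2) * (((2 * m : ℕ) : PowerSeries ℚ) + 1) * uS ^ (2 * m))
         = (2 * m + 2) * (2 * m + 1) * coeff (2 * n) (uS ^ (2 * m)) := by
        have : (((2 * m : ℕ) : PowerSeries ℚ) + 2) * (((2 * m : ℕ) : PowerSeries ℚ) + 1)
          = C ((2 * m + 2) * (2 * m + 1) : ℚ) := by simp [map_ofNat]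
        rw [this, coeff_C_mul]
      rw [hc] at h
      have i1 := ih m
      have i2 := ih (m + 1)
      rw [show 2 * (m + 1) = 2 * m + 1 + 1 by ring] at i2 ⊢
      rw [show 2 * (n + 1) = 2 * n + 1 + 1 by ring]
      simp only [Nat.factorial_succ] at i2 ⊢
      push_cast at i1 i2 h ⊢
      have f1 : ((2 * m).factorial : ℚ) ≠ 0 := by positivity
      have f2 : ((2 * n).factorial : ℚ) ≠ 0 := by positivity
      have g1 : (2 * (m : ℚ) + 1) ≠ 0 := by positivity
      have g2 : (2 * (m : ℚ) + 1 + 1) ≠ 0 := by positivity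
      have g3 : (2 * (n : ℚ) + 1) ≠ 0 := by positivity
      have g4 : (2 * (n : ℚ) + 1 + 1) ≠ 0 := by positivity
      have key : (if m + 1 ≤ n + 1 then (-4 : ℚ) ^ (n + 1 - (m + 1)) * (T2 (n + 1) (m + 1) : ℚ) else 0)
        = (if m ≤ n then (-4 : ℚ) ^ (n - m) * (T2 n m : ℚ) else 0) - 4 * n ^ 2 *
          (if m + 1 ≤ n then (-4 : ℚ) ^ (n - (m + 1)) * (T2 n (m + 1) : ℚ) else 0) := by
        rcases lt_trichotomy m n with hh | hh | hh
        · obtain ⟨d, rfl⟩ := Nat.exists_eq_add_of_lt hh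
          have a1 : m + d + 1 - m = d + 1 := by omega
          have a2 : m + d + 1 - (m + 1) = d := by omega
          have a3 : m + d + 1 + 1 - (m + 1) = d + 1 := by omega
          rw [if_pos (by omega), if_pos (by omega), if_pos (by omega), T2, a1, a2, a3]
          push_cast
          ring
        · subst hh
          have T0 : ∀ a b : ℕ, a < b → T2 a b = 0 := by
            intro a
            induction a with
            | zero => intro b hb; rcases b with _ | b
                      · omega
                      · rfl
            | succ a iha => intro b hb; rcases b with _ | b
                            · omega
                            · rw [T2, iha b (by omega), iha (b + 1) (by omega)]; simp
          simp [T2, T0 m (m + 1) (by omega)]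
        · rw [if_neg (by omega), if_neg (by omega), if_neg (by omega)]; simp
      simp only [Nat.add_sub_add_right, Nat.add_le_add_iff_right] at key ⊢
      rw [key]
      generalize (if m ≤ n then (-4 : ℚ) ^ (n - m) * (T2 n m : ℚ) else 0) = A at *
      generalize (if m + 1 ≤ n then (-4 : ℚ) ^ (n - (m + 1)) * (T2 n (m + 1) : ℚ) else 0) = B at *
      rw [show 2 * m + 1 + 1 = 2 * m + 2 from rfl] at *
      rw [show 2 * n + 1 + 1 = 2 * n + 2 from rfl] at *
      rw [div_eq_div_iff (by positivity) (by positivity)] at i1 i2 ⊢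
      generalize coeff (2 * n + 2) (uS ^ (2 * m + 2)) = P at *
      generalize coeff (2 * n) (uS ^ (2 * m + 2)) = Q at *
      generalize coeff (2 * n) (uS ^ (2 * m)) = R at *
      linear_combination (-((2 * n).factorial : ℚ)) * h +
        (2 * m + 2) * (2 * m + 1) * i1 - 4 * n ^ 2 * i2

theorem coeff_odd (n : ℕ) : ∀ m : ℕ, coeff (2 * n + 1) (uS ^ (2 * m)) = 0 := by
  induction n with
  | zero =>
    intro m
    rcases m with _ | m
    · simp [coeff_one]
    · rw [coeff_uS_pow_lt (by omega)]
  | succ n ih =>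
    intro m
    rcases m with _ | m
    · simp [coeff_one]
    · have h := coeff_Lop (uS ^ (2 * m + 2)) (2 * n + 1)
      rw [Lop_pow] at h
      have hc : coeff (2 * n + 1) ((((2 * m : ℕ) : PowerSeries ℚ) + 2) * (((2 * m : ℕ) : PowerSeries ℚ) + 1) * uS ^ (2 * m))
         = (2 * m + 2) * (2 * m + 1) * coeff (2 * n + 1) (uS ^ (2 * m)) := by
        have : (((2 * m : ℕ) : PowerSeries ℚ) + 2) * (((2 * m : ℕ) : PowerSeries ℚ) + 1)
          = C ((2 * m + 2) * (2 * m + 1) : ℚ) := by simp [map_ofNat]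
        rw [this, coeff_C_mul]
      have i2 := ih (m + 1)
      rw [show 2 * (m + 1) = 2 * m + 2 by ring] at i2 ⊢
      rw [hc, ih m, i2, mul_zero, mul_zero, add_zero] at h
      rw [show 2 * (n + 1) + 1 = 2 * n + 1 + 2 by ring]
      push_cast at h
      have g : (2 * (n : ℚ) + 1 + 2) * (2 * n + 1 + 1) ≠ 0 := by positivity
      rcases mul_eq_zero.1 h.symm with h | h
      · exact absurd h g
      · exact h

noncomputable def ZN (N : ℕ) : PowerSeries ℚ :=
  ∑ m ∈ Finset.range N, C (1 / ((2 * m + 1).factorial : ℚ)) * uS ^ (2 * m + 1)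

noncomputable def FN (N : ℕ) : PowerSeries ℚ :=
  ∑ m ∈ Finset.range N, C (1 / ((2 * m + 1).factorial : ℚ)) * uS ^ (2 * m)

theorem uFN (N : ℕ) : uS * FN N = ZN N := by
  rw [FN, ZN, Finset.mul_sum]
  exact Finset.sum_congr rfl fun m _ => by ring

theorem Lop_add (f g : PowerSeries ℚ) : Lop (f + g) = Lop f + Lop g := by
  simp [Lop]; ring

theorem Lop_C (a : ℚ) (g : PowerSeries ℚ) : Lop (C a * g) = C a * Lop g := by
  simp [Lop]; ring

theorem Lop_ZN (N : ℕ) : Lop (ZN (N + 1)) = ZN N := by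
  induction N with
  | zero =>
    simp only [ZN, zero_add, Finset.sum_range_one, Finset.sum_range_zero, Lop_C]
    rw [mul_zero, zero_add, Lop_one, mul_zero]
  | succ N ih =>
    rw [ZN, Finset.sum_range_succ, ← ZN, Lop_add, ih, Lop_C, show 2 * (N + 1) + 1 = (2 * N + 1) + 2 by ring, Lop_pow]
    conv_rhs => rw [ZN, Finset.sum_range_succ, ← ZN]
    congr 1
    rw [← mul_assoc]
    congr 1
    have : (((2 * N + 1 : ℕ) : PowerSeries ℚ) + 2) * (((2 * N + 1 : ℕ) : PowerSeries ℚ) + 1)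
          = C ((2 * N + 1 + 2) * (2 * N + 1 + 1) : ℚ) := by simp [map_ofNat]
    rw [this, ← map_mul, show 2 * N + 1 + 2 = 2 * N + 1 + 1 + 1 from rfl, Nat.factorial_succ, Nat.factorial_succ]
    congr 1
    push_cast
    have f1 : ((2 * N + 1).factorial : ℚ) ≠ 0 := by positivity
    field_simp
    ring

theorem coeff_ZN (k : ℕ) : ∀ N, k < 2 * N → coeff k (ZN N) = coeff k (X : PowerSeries ℚ) := by
  induction k using Nat.strong_induction_on with
  | _ k ih =>
    intro N hN
    rcases k with _ | _ | k
    · rw [ZN, map_sum, coeff_zero_X]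
      refine Finset.sum_eq_zero fun m _ => ?_
      rw [coeff_C_mul, coeff_uS_pow_lt (by omega), mul_zero]
    · obtain ⟨N, rfl⟩ : ∃ M, N = M + 1 := ⟨N - 1, by omega⟩
      rw [ZN, map_sum, Finset.sum_eq_single 0]
      · simp [uS, wc]
      · intro m _ hm
        rw [coeff_C_mul, coeff_uS_pow_lt (by omega), mul_zero]
      · simp
    · obtain ⟨N, rfl⟩ : ∃ M, N = M + 1 := ⟨N - 1, by omega⟩
      have h := coeff_Lop (ZN (N + 1)) k
      rw [Lop_ZN, ih k (by omega) N (by omega), ih k (by omega) (N + 1) (by omega)] at h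
      rw [coeff_X, if_neg (by omega)]
      rw [coeff_X] at h
      have g : ((k : ℚ) + 2) * (k + 1) ≠ 0 := by positivity
      have : ((k : ℚ) + 2) * (k + 1) * coeff (k + 1 + 1) (ZN (N + 1)) = 0 := by
        split_ifs at h with hk
        · subst hk; push_cast at h ⊢; linarith
        · simpa using h.symm
      exact (mul_eq_zero.1 this).resolve_left g

noncomputable def HS : PowerSeries ℚ := PowerSeries.mk fun n => cauchy2 n / ((2 * n).factorial : ℚ)

noncomputable def FS : PowerSeries ℚ := expand 2 two_ne_zero HS

theorem coeff_FN (k N : ℕ) (h : k < 2 * N) : coeff k FS = coeff k (FN N) := by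
  rcases Nat.even_or_odd' k with ⟨n, rfl | rfl⟩
  · rw [FS, coeff_expand_mul, HS, coeff_mk, FN, map_sum, cauchy2, Finset.sum_div]
    rw [← Finset.sum_subset (Finset.range_subset_range.2 (show n + 1 ≤ N by omega))]
    · refine Finset.sum_congr rfl fun m hm => ?_
      have := coeff_E n m
      rw [if_pos (by simp at hm; omega)] at this
      rw [coeff_C_mul, Nat.factorial_succ]
      push_cast
      have g : (2 * (m : ℚ) + 1) ≠ 0 := by positivity
      have f1 : ((2 * m).factorial : ℚ) ≠ 0 := by positivity
      have f2 : ((2 * n).factorial : ℚ) ≠ 0 := by positivity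
      field_simp at this ⊢
      linear_combination -this
    · intro m _ hm
      rw [coeff_C_mul, coeff_uS_pow_lt (by simp at hm; omega), mul_zero]
  · rw [FS, coeff_expand_of_not_dvd _ _ _ (by omega), FN, map_sum]
    symm
    refine Finset.sum_eq_zero fun m _ => ?_
    rw [coeff_C_mul, coeff_odd, mul_zero]

theorem uF : uS * FS = X := by
  ext k
  rw [← coeff_ZN k (k + 1) (by omega), ← uFN, coeff_mul, coeff_mul]
  refine Finset.sum_congr rfl fun p hp => ?_
  rw [coeff_FN p.2 (k + 1)]
  have := Finset.HasAntidiagonal.mem_antidiagonal.1 hp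
  omega

/-- Euler operator -/
noncomputable def th : Derivation ℚ (PowerSeries ℚ) (PowerSeries ℚ) := (X : PowerSeries ℚ) • d⁄dX ℚ

theorem th_apply (f : PowerSeries ℚ) : th f = X * d⁄dX ℚ f := rfl

theorem coeff_th (f : PowerSeries ℚ) (k : ℕ) : coeff k (th f) = k * coeff k f := by
  rw [th_apply]
  rcases k with _ | k
  · simp
  · rw [coeff_succ_X_mul, coeff_derivative]; push_cast; ring

theorem th_F : th FS = FS - wS * FS ^ 2 := by
  have h := congrArg (d⁄dX ℚ) uF
  simp only [Derivation.leibniz, smul_eq_mul, D_uS, derivative_X] at h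
  rw [th_apply]
  linear_combination FS * h - (d⁄dX ℚ FS) * uF

theorem th_w : th wS = wS ^ 3 - wS := by
  have h := D_wS
  have h2 := wS_sq
  rw [th_apply]
  have e : d⁄dX ℚ wS = - (X * wS ^ 3) := by
    linear_combination wS ^ 2 * h - (d⁄dX ℚ wS) * h2
  rw [e]
  linear_combination -wS * h2

theorem th_num (k : ℤ) (f : PowerSeries ℚ) : th ((k : PowerSeries ℚ) * f) = (k : PowerSeries ℚ) * th f := by
  rw [← zsmul_eq_mul, map_zsmul, zsmul_eq_mul]

theorem wS_ne : wS ≠ 0 := by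
  intro h
  have := wS_sq
  rw [h] at this
  simp at this

theorem main_ode :
    24 * FS ^ 5 = (th (th (th (th FS))) - 10 * th (th (th FS)) + 35 * th (th FS) - 50 * th FS + 24 * FS)
      + X * (X * (2 * (th (th (th (th FS))) - 7 * th (th (th FS)) + 19 * th (th FS) - 23 * th FS + 10 * FS)))
      + X * (X * (X * (X * (th (th (th (th FS))) - 4 * th (th (th FS)) + 6 * th (th FS) - 4 * th FS + FS)))) := by
  have hF := th_F
  have hw := th_w
  have hx : X ^ 2 * wS ^ 2 = 1 - wS ^ 2 := by linear_combination wS_sq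
  have hz : ∀ (k : ℕ) [k.AtLeastTwo], th (OfNat.ofNat k : PowerSeries ℚ) = 0 := fun k _ => Derivation.map_natCast th k
  have e1 : th (FS) = (1) * FS ^ 1 * wS ^ 0 + (-1) * FS ^ 2 * wS ^ 1 := by
    rw [hF]; ring
  have e2 : th (th (FS)) = (1) * FS ^ 1 * wS ^ 0 + (-2) * FS ^ 2 * wS ^ 1 + (-1) * FS ^ 2 * wS ^ 3 + (2) * FS ^ 3 * wS ^ 2 := by
    rw [e1]; simp only [map_add, Derivation.leibniz, Derivation.leibniz_pow, smul_eq_mul, nsmul_eq_mul, hF, hw, hz, Derivation.map_one_eq_zero, Derivation.map_neg]; push_cast; ring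
  have e3 : th (th (th (FS))) = (1) * FS ^ 1 * wS ^ 0 + (-3) * FS ^ 2 * wS ^ 1 + (-1) * FS ^ 2 * wS ^ 3 + (-3) * FS ^ 2 * wS ^ 5 + (6) * FS ^ 3 * wS ^ 2 + (6) * FS ^ 3 * wS ^ 4 + (-6) * FS ^ 4 * wS ^ 3 := by
    rw [e2]; simp only [map_add, Derivation.leibniz, Derivation.leibniz_pow, smul_eq_mul, nsmul_eq_mul, hF, hw, hz, Derivation.map_one_eq_zero, Derivation.map_neg]; push_cast; ring
  have e4 : th (th (th (th (FS)))) = (1) * FS ^ 1 * wS ^ 0 + (-4) * FS ^ 2 * wS ^ 1 + (-2) * FS ^ 2 * wS ^ 3 + (6) * FS ^ 2 * wS ^ 5 + (-15) * FS ^ 2 * wS ^ 7 + (12) * FS ^ 3 * wS ^ 2 + (8) * FS ^ 3 * wS ^ 4 + (30) * FS ^ 3 * wS ^ 6 + (-24) * FS ^ 4 * wS ^ 3 + (-36) * FS ^ 4 * wS ^ 5 + (24) * FS ^ 5 * wS ^ 4 := by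
    rw [e3]; simp only [map_add, Derivation.leibniz, Derivation.leibniz_pow, smul_eq_mul, nsmul_eq_mul, hF, hw, hz, Derivation.map_one_eq_zero, Derivation.map_neg]; push_cast; ring
  have hw4 : wS ^ 4 ≠ 0 := pow_ne_zero _ wS_ne
  apply mul_left_cancel₀ hw4
  have key : ∀ A B C' : PowerSeries ℚ, wS ^ 4 * (A + X * (X * (2 * B)) + X * (X * (X * (X * C')))) =
      wS ^ 4 * A + wS ^ 2 * (1 - wS ^ 2) * (2 * B) + (1 - wS ^ 2) ^ 2 * C' := by
    intro A B C'
    linear_combination (wS ^ 2 * 2 * B + C' * (X ^ 2 * wS ^ 2 + 1 - wS ^ 2)) * hx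
  rw [key, e4, e3, e2, e1]
  ring

theorem choose_four (k : ℕ) : (Nat.choose k 4 : ℚ) = k * (k - 1) * (k - 2) * (k - 3) / 24 := by
  have h3 : ∀ k : ℕ, (Nat.choose k 3 : ℚ) = k * (k - 1) * (k - 2) / 6 := by
    intro k
    induction k with
    | zero => simp
    | succ k ih => rw [Nat.choose_succ_succ]; push_cast; rw [ih, Nat.cast_choose_two]; ring
  induction k with
  | zero => simp
  | succ k ih => rw [Nat.choose_succ_succ]; push_cast; rw [ih, h3]; ring

theorem coeff_F5 (n : ℕ) : ∑ x ∈ Finset.Nat.antidiagonalTuple 5 n,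
        (Nat.multinomial Finset.univ (fun j => 2 * x j) : ℚ) * ∏ j, cauchy2 (x j) =
    ((2 * n).factorial : ℚ) * coeff (2 * n) (FS ^ 5) := by
  rw [FS, ← map_pow, coeff_expand_mul, coeff_pow_tuple, Finset.mul_sum]
  refine Finset.sum_congr rfl fun x hx => ?_
  have hs := Finset.Nat.mem_antidiagonalTuple.1 hx
  have h := Nat.multinomial_spec Finset.univ (fun j => 2 * x j)
  rw [← Finset.mul_sum, hs] at h
  rw [← h]
  simp only [HS, coeff_mk, Finset.prod_div_distrib]
  push_cast
  have : (∏ j, ((2 * x j).factorial : ℚ)) ≠ 0 := Finset.prod_ne_zero_iff.2 fun j _ => by positivity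
  field_simp

theorem coeff_FS (n : ℕ) : coeff (2 * n) FS = cauchy2 n / ((2 * n).factorial : ℚ) := by
  rw [FS, coeff_expand_mul, HS, coeff_mk]

theorem statement7 (n : ℕ) (hn : 2 ≤ n) :
    ∑ x ∈ Finset.Nat.antidiagonalTuple 5 n,
        (Nat.multinomial Finset.univ (fun j => 2 * x j) : ℚ) * ∏ j, cauchy2 (x j) =
    (Nat.choose (2 * n - 1) 4 : ℚ) * cauchy2 n
    + (4 * (n : ℚ) ^ 2 - 16 * (n : ℚ) + 17) / 3 *
        (Nat.choose (2 * n) 2 : ℚ) * (Nat.choose (2 * n - 3) 2 : ℚ) * cauchy2 (n - 1)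
    + (Nat.choose (2 * n) 4 : ℚ) * (2 * (n : ℚ) - 5) ^ 4 * cauchy2 (n - 2) := by
  obtain ⟨m, rfl⟩ := Nat.exists_eq_add_of_le' hn
  rw [coeff_F5]
  have h := congrArg (coeff (2 * (m + 2))) main_ode
  have hnum : ∀ (k : ℕ) (j : ℕ) [j.AtLeastTwo] (f : PowerSeries ℚ),
      coeff k ((OfNat.ofNat j : PowerSeries ℚ) * f) = (OfNat.ofNat j : ℚ) * coeff k f := by
    intro k j _ f
    rw [← coeff_C_mul, map_ofNat]
  have s2 : 2 * (m + 2) = 2 * m + 1 + 1 + 1 + 1 := by ring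
  rw [hnum, map_add, map_add] at h
  rw [show coeff (2 * (m + 2)) (X * (X * (2 * (th (th (th (th FS))) - 7 * th (th (th FS)) + 19 * th (th FS) - 23 * th FS + 10 * FS))))
    = coeff (2 * (m + 1)) (2 * (th (th (th (th FS))) - 7 * th (th (th FS)) + 19 * th (th FS) - 23 * th FS + 10 * FS)) by
      rw [s2, coeff_succ_X_mul, coeff_succ_X_mul]; rfl,
    show coeff (2 * (m + 2)) (X * (X * (X * (X * (th (th (th (th FS))) - 4 * th (th (th FS)) + 6 * th (th FS) - 4 * th FS + FS)))))
    = coeff (2 * m) (th (th (th (th FS))) - 4 * th (th (th FS)) + 6 * th (th FS) - 4 * th FS + FS) by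
      rw [s2, coeff_succ_X_mul, coeff_succ_X_mul, coeff_succ_X_mul, coeff_succ_X_mul]] at h
  simp only [map_add, map_sub, hnum, coeff_th, coeff_FS] at h
  have a1 : m + 2 - 1 = m + 1 := by omega
  have a2 : m + 2 - 2 = m := by omega
  have a3 : 2 * (m + 2) - 1 = 2 * m + 3 := by omega
  have a4 : 2 * (m + 2) - 3 = 2 * m + 1 := by omega
  rw [a1, a2, a3, a4, choose_four, choose_four, Nat.cast_choose_two, Nat.cast_choose_two]
  generalize coeff (2 * (m + 2)) (FS ^ 5) = Z at *
  rw [show 2 * (m + 1) = 2 * m + 1 + 1 by ring, s2] at h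
  rw [s2]
  simp only [Nat.factorial_succ] at h ⊢
  push_cast at h ⊢
  have f0 : ((2 * m).factorial : ℚ) ≠ 0 := by positivity
  have g1 : (2 * (m : ℚ) + 1) ≠ 0 := by positivity
  have g2 : (2 * (m : ℚ) + 1 + 1) ≠ 0 := by positivity
  have g3 : (2 * (m : ℚ) + 1 + 1 + 1) ≠ 0 := by positivity
  have g4 : (2 * (m : ℚ) + 1 + 1 + 1 + 1) ≠ 0 := by positivity
  have hZ : Z = (24 * Z) / 24 := by ring
  rw [hZ, h]
  field_simp
  ring
end
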